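/- arXiv:2009.03379 — 2 statements merged into one kernel-verified Lean document; each statement's English description precedes it below -/
import Mathlib

section
/- Fix prices p^1,…,p^T ∈ ℝ^K_{++} and a counterfactual price p̃ ∈ ℝ^K_{++}. Let D^0 = {(d^{0,t},p^t)}_{t=1}^T and D^1 = {(d^{1,t},p^t)}_{t=1}^T be two datasets differing only in quantities. If d̃^j ∈ X(p̃, D^j, ε^j) for j ∈ {0,1}, then for any α ∈ [0,1], α d̃^0 + (1−α) d̃^1 ∈ X(p̃, αD^0 + (1−α)D^1, αε^0 + (1−α)ε^1), where αD^0 + (1−α)D^1 is the dataset with quantities αd^{0,t} + (1−α)d^{1,t} and the same prices. Moreover, the set A = {(d,ε) ∈ ℝ^{K×T}_+ × ℝ_+ : ε ≥ ε*({(d^t,p^t)}_{t=1}^T)} is convex. -/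
/-!
For nonnegative quantities, being `ε`-rationalized is equivalent to a finite system of
inequalities in the values `v t` of an indirect utility at the observed prices:
`v t + p t · x t - ε ≤ v s + p s · x t` for all `s, t` (`epsRationalized_iff`).
From a utility `u` one takes `v t = u (x t) - p t · x t + ε`; conversely `v` yields the concave
utility `u y = min_t (v t + p t · y)`. As the prices are fixed, the system is jointly linear
in `(v, x, ε)`, so its solutions can be averaged (`EpsRationalized.comb`). This gives the first
claim, applied to the augmented datasets.

For the convexity of `A`, some finite `ε` always solves the system
(`exists_epsRationalized`), so `ε ≥ ε*(d)` implies that `d` is `(ε + δ)`-rationalized for every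
`δ > 0`; averaging these and letting `δ → 0` gives the claim without having to show that the
infimum `ε*` is attained.
-/

open Finset

noncomputable section

/-- Dot product on `ℝ^K`. -/
def dot {K : ℕ} (a b : Fin K → ℝ) : ℝ := ∑ i, a i * b i

/-- `y ∈ ℝ^K_+`. -/
def Nonneg {K : ℕ} (y : Fin K → ℝ) : Prop := ∀ i, 0 ≤ y i

/-- The utility function `u` ε-rationalizes the dataset `{(x^t, p^t)}_{t=1}^T`. -/
def Rationalizes {K T : ℕ} (x p : Fin T → Fin K → ℝ) (ε : ℝ)
    (u : (Fin K → ℝ) → ℝ) : Prop :=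
  ∀ t : Fin T, ∀ y : Fin K → ℝ, Nonneg y →
    u y - dot (p t) y - ε ≤ u (x t) - dot (p t) (x t)

/-- The dataset `{(x^t, p^t)}_{t=1}^T` is ε-rationalized by quasilinear utility. -/
def EpsRationalized {K T : ℕ} (x p : Fin T → Fin K → ℝ) (ε : ℝ) : Prop :=
  ∃ u : (Fin K → ℝ) → ℝ, Rationalizes x p ε u

/-- `ε'` is the smallest `ε ≥ 0` such that the dataset is ε-rationalized. -/
def IsEpsStar {K T : ℕ} (x p : Fin T → Fin K → ℝ) (ε' : ℝ) : Prop :=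
  0 ≤ ε' ∧ EpsRationalized x p ε' ∧
    ∀ ε : ℝ, 0 ≤ ε → EpsRationalized x p ε → ε' ≤ ε

/-- The counterfactual quantity set `X(p̃,D,ε)`. -/
def Xset {K T : ℕ} (x p : Fin T → Fin K → ℝ) (pt : Fin K → ℝ) (ε : ℝ) :
    Set (Fin K → ℝ) :=
  {xt | Nonneg xt ∧ EpsRationalized (Fin.cons xt x) (Fin.cons pt p) ε}

/-- With the prices `p` fixed, `ε*` as a function of the quantities `d`. -/
def epsStarF {K T : ℕ} (p : Fin T → Fin K → ℝ) (d : Fin T → Fin K → ℝ) : ℝ :=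
  sInf {ε : ℝ | 0 ≤ ε ∧ EpsRationalized d p ε}

theorem dot_comb {K : ℕ} (q x y : Fin K → ℝ) (a b : ℝ) :
    dot q (a • x + b • y) = a * dot q x + b * dot q y := by
  simp only [dot, Pi.add_apply, Pi.smul_apply, smul_eq_mul, Finset.mul_sum,
    ← Finset.sum_add_distrib]
  exact Finset.sum_congr rfl fun i _ => by ring

theorem Nonneg.comb {K : ℕ} {x y : Fin K → ℝ} (hx : Nonneg x) (hy : Nonneg y)
    {a b : ℝ} (ha : 0 ≤ a) (hb : 0 ≤ b) : Nonneg (a • x + b • y) := fun i =>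
  add_nonneg (mul_nonneg ha (hx i)) (mul_nonneg hb (hy i))

/-- Dual, Afriat-type characterization of `ε`-rationalizability. The case `s = t` of the system
encodes `0 ≤ ε`. -/
theorem epsRationalized_iff {K T : ℕ} {x p : Fin T → Fin K → ℝ} {ε : ℝ}
    (hx : ∀ t, Nonneg (x t)) :
    EpsRationalized x p ε ↔
      ∃ v : Fin T → ℝ, ∀ s t, v t + dot (p t) (x t) - ε ≤ v s + dot (p s) (x t) := by
  constructor
  · rintro ⟨u, hu⟩
    refine ⟨fun t => u (x t) - dot (p t) (x t) + ε, fun s t => ?_⟩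
    have := hu s (x t) (hx t)
    linarith
  · rintro ⟨v, hv⟩
    refine ⟨fun y => ⨅ t, (v t + dot (p t) y), fun t y _ => ?_⟩
    have : Nonempty (Fin T) := ⟨t⟩
    have h1 : (⨅ s, (v s + dot (p s) y)) ≤ v t + dot (p t) y :=
      ciInf_le (Set.finite_range _).bddBelow t
    have h2 : v t + dot (p t) (x t) - ε ≤ ⨅ s, (v s + dot (p s) (x t)) :=
      le_ciInf fun s => hv s t
    linarith

/-- Rationalizability is preserved by averaging quantities and errors at fixed prices. -/
theorem EpsRationalized.comb {K T : ℕ} {x y p : Fin T → Fin K → ℝ} {ε δ : ℝ}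
    (hx : ∀ t, Nonneg (x t)) (hy : ∀ t, Nonneg (y t))
    (h0 : EpsRationalized x p ε) (h1 : EpsRationalized y p δ)
    {a b : ℝ} (ha : 0 ≤ a) (hb : 0 ≤ b) :
    EpsRationalized (a • x + b • y) p (a * ε + b * δ) := by
  obtain ⟨v, hv⟩ := (epsRationalized_iff hx).1 h0
  obtain ⟨w, hw⟩ := (epsRationalized_iff hy).1 h1
  refine (epsRationalized_iff fun t => (hx t).comb (hy t) ha hb).2
    ⟨fun t => a * v t + b * w t, fun s t => ?_⟩
  rw [dot_comb, dot_comb]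
  have h2 := mul_le_mul_of_nonneg_left (hv s t) ha
  have h3 := mul_le_mul_of_nonneg_left (hw s t) hb
  linarith

theorem EpsRationalized.mono {K T : ℕ} {x p : Fin T → Fin K → ℝ} {ε δ : ℝ}
    (h : EpsRationalized x p ε) (hε : ε ≤ δ) : EpsRationalized x p δ := by
  obtain ⟨u, hu⟩ := h
  refine ⟨u, fun t y hy => ?_⟩
  have := hu t y hy
  linarith

/-- The set whose infimum is `epsStarF p d` is nonempty, so that infimum is not a junk value. -/
theorem exists_epsRationalized {K T : ℕ} (p d : Fin T → Fin K → ℝ)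
    (hd : ∀ t, Nonneg (d t)) : ∃ ε : ℝ, 0 ≤ ε ∧ EpsRationalized d p ε := by
  -- With `v = 0`, any `ε` bounding all differences of expenditures solves the system.
  let f : Fin T × Fin T → ℝ := fun z => |dot (p z.2) (d z.2) - dot (p z.1) (d z.2)|
  have hf : ∀ z, 0 ≤ f z := fun z => abs_nonneg _
  refine ⟨∑ z, f z, Finset.sum_nonneg fun z _ => hf z,
    (epsRationalized_iff hd).2 ⟨fun _ => 0, fun s t => ?_⟩⟩
  have h1 : f (s, t) ≤ ∑ z, f z :=
    Finset.single_le_sum (fun z _ => hf z) (Finset.mem_univ (s, t))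
  have h2 : dot (p t) (d t) - dot (p s) (d t) ≤ f (s, t) := le_abs_self _
  linarith

theorem epsRationalized_of_epsStarF_lt {K T : ℕ} {p d : Fin T → Fin K → ℝ} {ε : ℝ}
    (hd : ∀ t, Nonneg (d t)) (h : epsStarF p d < ε) : EpsRationalized d p ε := by
  obtain ⟨ε', ⟨_, h1⟩, h2⟩ := exists_lt_of_csInf_lt (exists_epsRationalized p d hd) h
  exact h1.mono h2.le

/-- Convex combinations of feasible counterfactual quantities (for datasets
sharing the same prices) are feasible for the convex combination of the datasets and
approximation errors; moreover the set
`A = {(d,ε) : d ∈ ℝ^{K×T}_+, ε ≥ 0, ε ≥ ε*(d)}` is convex. -/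
theorem counterfactual_feasibility_convex {K T : ℕ}
    (p : Fin T → Fin K → ℝ) (hp : ∀ t i, 0 < p t i)
    (pt : Fin K → ℝ) (hpt : ∀ i, 0 < pt i) :
    (∀ (d0 d1 : Fin T → Fin K → ℝ), (∀ t, Nonneg (d0 t)) → (∀ t, Nonneg (d1 t)) →
      ∀ (dt0 dt1 : Fin K → ℝ) (ε0 ε1 : ℝ),
        dt0 ∈ Xset d0 p pt ε0 → dt1 ∈ Xset d1 p pt ε1 →
        ∀ α : ℝ, 0 ≤ α → α ≤ 1 →
          α • dt0 + (1 - α) • dt1 ∈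
            Xset (α • d0 + (1 - α) • d1) p pt (α * ε0 + (1 - α) * ε1)) ∧
    Convex ℝ {q : (Fin T → Fin K → ℝ) × ℝ |
      (∀ t, Nonneg (q.1 t)) ∧ 0 ≤ q.2 ∧ epsStarF p q.1 ≤ q.2} := by
  constructor
  · rintro d0 d1 hd0 hd1 dt0 dt1 ε0 ε1 ⟨hn0, h0⟩ ⟨hn1, h1⟩ α hα hα'
    have hβ : 0 ≤ 1 - α := sub_nonneg.2 hα'
    refine ⟨hn0.comb hn1 hα hβ, ?_⟩
    have hc : ∀ (z : Fin K → ℝ) (d : Fin T → Fin K → ℝ), Nonneg z → (∀ t, Nonneg (d t)) →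
        ∀ t : Fin (T + 1), Nonneg ((Fin.cons z d : Fin (T + 1) → Fin K → ℝ) t) :=
      fun z d hz hd t => Fin.cases hz hd t
    have key := h0.comb (hc _ _ hn0 hd0) (hc _ _ hn1 hd1) h1 hα hβ
    convert key using 1
    funext t
    refine Fin.cases ?_ (fun i => ?_) t <;> rfl
  · rintro ⟨d0, ε0⟩ ⟨hd0, hε0, h0⟩ ⟨d1, ε1⟩ ⟨hd1, hε1, h1⟩ a b ha hb hab
    have hε : 0 ≤ a * ε0 + b * ε1 := add_nonneg (mul_nonneg ha hε0) (mul_nonneg hb hε1)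
    refine ⟨fun t => (hd0 t).comb (hd1 t) ha hb, hε, le_of_forall_pos_le_add fun δ hδ => ?_⟩
    have r0 : EpsRationalized d0 p (ε0 + δ) :=
      epsRationalized_of_epsStarF_lt hd0 (lt_of_le_of_lt h0 (lt_add_of_pos_right _ hδ))
    have r1 : EpsRationalized d1 p (ε1 + δ) :=
      epsRationalized_of_epsStarF_lt hd1 (lt_of_le_of_lt h1 (lt_add_of_pos_right _ hδ))
    have e : a * (ε0 + δ) + b * (ε1 + δ) = a * ε0 + b * ε1 + δ := by
      linear_combination δ * hab
    have r := r0.comb hd0 hd1 r1 ha hb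
    rw [e] at r
    exact csInf_le ⟨0, fun _ h => h.1⟩ ⟨add_nonneg hε hδ.le, r⟩
end
end

section
/- Let {(x^t,p^t)}_{t=1}^T be an arbitrary dataset and ε ≥ 0. (i) If u : ℝ^K_+ → ℝ satisfies u(x^t) − p^t·x^t ≥ u(x) − p^t·x − ε for every t ∈ {1,…,T} and every x ∈ ℝ^K_+, then the indirect utility V_u(p) = sup_{x ∈ ℝ^K_+}(u(x) − p·x) satisfies V_u(p) ≥ V_u(p^t) − x^t·(p − p^t) − ε for every t and every p ∈ ℝ^K_+. (ii) Conversely, if V : ℝ^K_+ → ℝ satisfies V(p) ≥ V(p^t) − x^t·(p − p^t) − ε for every t and every p ∈ ℝ^K_+, then the dual utility u_V(x) = inf_{p ∈ ℝ^K_+}(V(p) + p·x) satisfies u_V(x^t) − p^t·x^t ≥ u_V(x) − p^t·x − ε for every t and every x ∈ ℝ^K_+. -/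
/-!
Each extended-real inequality is separated by a real number. In the first part,
ε-rationalization bounds `V_u(p^t)` above by `u(x^t) − p^t·x^t + ε`, while `x^t` is a feasible
choice at any other price `p`, so `V_u(p) ≥ u(x^t) − p·x^t`. In the second part, the
hypothesis bounds `u_V(x^t)` below by `V(p^t) + p^t·x^t − ε`, while `p^t` is a feasible choice
in the infimum at any `y`, so `u_V(y) ≤ V(p^t) + p^t·y`. Since the separating bounds are real,
no finiteness of `V_u` or `u_V` is needed.
-/

open Finset

noncomputable section

/-- The indirect utility `V_u(p) = sup_{y ∈ ℝ^K_+} (u(y) − p·y)` as an extended real. -/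
def EVind {K : ℕ} (u : (Fin K → ℝ) → ℝ) (pp : Fin K → ℝ) : EReal :=
  ⨆ y ∈ {y : Fin K → ℝ | Nonneg y}, ((u y - dot pp y : ℝ) : EReal)

/-- The dual utility `u_V(x) = inf_{p ∈ ℝ^K_+} (V(p) + p·x)` as an extended real. -/
def EuV {K : ℕ} (V : (Fin K → ℝ) → ℝ) (xx : Fin K → ℝ) : EReal :=
  ⨅ pp ∈ {pp : Fin K → ℝ | Nonneg pp}, ((V pp + dot pp xx : ℝ) : EReal)

lemma dot_comm {K : ℕ} (a b : Fin K → ℝ) : dot a b = dot b a := by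
  simp [dot, mul_comm]

lemma dot_sub_right {K : ℕ} (a b c : Fin K → ℝ) : dot a (b - c) = dot a b - dot a c := by
  simp [dot, mul_sub, Finset.sum_sub_distrib]

lemma le_EVind {K : ℕ} (u : (Fin K → ℝ) → ℝ) (q y : Fin K → ℝ) (hy : Nonneg y) :
    ((u y - dot q y : ℝ) : EReal) ≤ EVind u q :=
  le_iSup₂ (f := fun (y : Fin K → ℝ) (_ : y ∈ {y : Fin K → ℝ | Nonneg y}) =>
    ((u y - dot q y : ℝ) : EReal)) y hy

lemma EuV_le {K : ℕ} (V : (Fin K → ℝ) → ℝ) (q y : Fin K → ℝ) (hq : Nonneg q) :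
    EuV V y ≤ ((V q + dot q y : ℝ) : EReal) :=
  iInf₂_le (f := fun (q : Fin K → ℝ) (_ : q ∈ {q : Fin K → ℝ | Nonneg q}) =>
    ((V q + dot q y : ℝ) : EReal)) q hq

/-- Duality between approximate rationalization by a utility function and
the corresponding inequalities for (indirect) utility functions over prices. -/
theorem duality_utility_indirect {K T : ℕ} (x p : Fin T → Fin K → ℝ)
    (hx : ∀ t, Nonneg (x t)) (hp : ∀ t i, 0 < p t i) (ε : ℝ) (hε : 0 ≤ ε) :
    (∀ u : (Fin K → ℝ) → ℝ, Rationalizes x p ε u →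
      ∀ t : Fin T, ∀ pp : Fin K → ℝ, Nonneg pp →
        EVind u (p t) - ((dot (x t) (pp - p t) : ℝ) : EReal) - ((ε : ℝ) : EReal) ≤
          EVind u pp) ∧
    (∀ V : (Fin K → ℝ) → ℝ,
      (∀ t : Fin T, ∀ pp : Fin K → ℝ, Nonneg pp →
        V (p t) - dot (x t) (pp - p t) - ε ≤ V pp) →
      ∀ t : Fin T, ∀ y : Fin K → ℝ, Nonneg y →
        EuV V y - ((dot (p t) y : ℝ) : EReal) - ((ε : ℝ) : EReal) ≤
          EuV V (x t) - ((dot (p t) (x t) : ℝ) : EReal)) := by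
  constructor
  · intro u hu t q hq
    have hub : EVind u (p t) ≤ ((u (x t) - dot (p t) (x t) + ε : ℝ) : EReal) :=
      iSup₂_le fun y hy => EReal.coe_le_coe_iff.2 (by linarith [hu t y hy])
    refine le_trans (EReal.sub_le_sub (EReal.sub_le_sub hub le_rfl) le_rfl) ?_
    refine le_trans ?_ (le_EVind u q (x t) (hx t))
    rw [← EReal.coe_sub, ← EReal.coe_sub, EReal.coe_le_coe_iff, dot_sub_right,
      dot_comm (x t) q, dot_comm (x t) (p t)]
    linarith
  · intro V hV t y hy
    have hlb : ((V (p t) + dot (p t) (x t) - ε : ℝ) : EReal) ≤ EuV V (x t) := by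
      refine le_iInf₂ fun q hq => EReal.coe_le_coe_iff.2 ?_
      have h := hV t q hq
      rw [dot_sub_right, dot_comm (x t) q, dot_comm (x t) (p t)] at h
      linarith
    have hub := EuV_le V (p t) y fun i => (hp t i).le
    refine le_trans (EReal.sub_le_sub (EReal.sub_le_sub hub le_rfl) le_rfl) ?_
    refine le_trans ?_ (EReal.sub_le_sub hlb le_rfl)
    rw [← EReal.coe_sub, ← EReal.coe_sub, ← EReal.coe_sub, EReal.coe_le_coe_iff]
    linarith
end
end
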